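/- Let α₀ > 0 and β₀ > 0. For any σ₁ > 0 and σ₂ > 0, the infima satisfy the scaling relation M_{σ₁} = (σ₁/σ₂)^{2/3} M_{σ₂}. -/

import Mathlib

/-! The functional `I` is homogeneous of degree 2 and the constraint `∫ f² g` is homogeneous of
degree 3 under `(f, g) ↦ (t f, t g)`. With `t = (σ₁ / σ₂) ^ (1/3)` this dilation, inverted by
`t⁻¹`, identifies the admissible values for `σ₁` with `t ^ 2` times those for `σ₂`
(`sq_mul_mem_IvalSet`), and `sInf` commutes with multiplication by the nonnegative number `t ^ 2`,
even for the default value of `sInf` on an empty or unbounded set. -/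

open MeasureTheory Filter Topology

noncomputable section

/-- Membership in `H¹(ℝ)`: `f` is differentiable with `f` and `f'` square-integrable. -/
def InH1 (f : ℝ → ℝ) : Prop :=
  Differentiable ℝ f ∧ Integrable (fun x => f x ^ 2) ∧ Integrable (fun x => deriv f x ^ 2)

/-- The functional `I(f,g) = ∫ (f'² + g'² + α₀ f² + β₀ g²)`. -/
def Ifun (α₀ β₀ : ℝ) (f g : ℝ → ℝ) : ℝ :=
  ∫ x : ℝ, (deriv f x ^ 2 + deriv g x ^ 2 + α₀ * f x ^ 2 + β₀ * g x ^ 2)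

/-- The set of values `I(f,g)` over pairs in `H¹ × H¹` with `∫ f² g = lam`. -/
def IvalSet (α₀ β₀ lam : ℝ) : Set ℝ :=
  {m | ∃ f g : ℝ → ℝ, InH1 f ∧ InH1 g ∧ (∫ x : ℝ, f x ^ 2 * g x) = lam ∧ Ifun α₀ β₀ f g = m}

/-- `M_lam`, the infimum of `I` subject to the constraint `∫ f² g = lam`. -/
def Mfun (α₀ β₀ lam : ℝ) : ℝ := sInf (IvalSet α₀ β₀ lam)

lemma InH1.const_mul {f : ℝ → ℝ} (hf : InH1 f) (t : ℝ) : InH1 (fun x => t * f x) := by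
  obtain ⟨hd, h0, h1⟩ := hf
  refine ⟨hd.const_mul t, ?_, ?_⟩
  · simpa only [mul_pow] using h0.const_mul (t ^ 2)
  · simpa only [deriv_const_mul_field, mul_pow] using h1.const_mul (t ^ 2)

/-- Multiplying both functions by `t` multiplies the constraint by `t ^ 3` and `I` by `t ^ 2`. -/
lemma sq_mul_mem_IvalSet {α₀ β₀ lam m : ℝ} (t : ℝ) (hm : m ∈ IvalSet α₀ β₀ lam) :
    t ^ 2 * m ∈ IvalSet α₀ β₀ (t ^ 3 * lam) := by
  obtain ⟨f, g, hf, hg, hlam, hI⟩ := hm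
  refine ⟨fun x => t * f x, fun x => t * g x, hf.const_mul t, hg.const_mul t, ?_, ?_⟩
  · rw [← hlam, ← integral_const_mul]
    congr 1 with x
    ring
  · rw [← hI, Ifun, Ifun, ← integral_const_mul]
    congr 1 with x
    rw [deriv_const_mul_field, deriv_const_mul_field]
    ring

open scoped Pointwise in
/-- the scaling relation `M_{σ₁} = (σ₁/σ₂)^{2/3} M_{σ₂}`. -/
theorem Mlam_scaling (α₀ β₀ : ℝ) (hα : 0 < α₀) (hβ : 0 < β₀)
    (σ₁ σ₂ : ℝ) (hσ₁ : 0 < σ₁) (hσ₂ : 0 < σ₂) :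
    Mfun α₀ β₀ σ₁ = (σ₁ / σ₂) ^ ((2 : ℝ) / 3) * Mfun α₀ β₀ σ₂ := by
  set t : ℝ := (σ₁ / σ₂) ^ ((1 : ℝ) / 3) with ht
  have hr : 0 < σ₁ / σ₂ := div_pos hσ₁ hσ₂
  have htpos : 0 < t := Real.rpow_pos_of_pos hr _
  have ht3 : t ^ 3 = σ₁ / σ₂ := by
    rw [ht, ← Real.rpow_natCast, ← Real.rpow_mul hr.le]
    norm_num
  have ht2 : (σ₁ / σ₂) ^ ((2 : ℝ) / 3) = t ^ 2 := by
    rw [ht, ← Real.rpow_natCast, ← Real.rpow_mul hr.le]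
    norm_num
  have hset : IvalSet α₀ β₀ σ₁ = (t ^ 2) • IvalSet α₀ β₀ σ₂ := by
    ext m
    constructor
    · intro hm
      refine ⟨t⁻¹ ^ 2 * m, ?_, ?_⟩
      · have h := sq_mul_mem_IvalSet t⁻¹ hm
        rwa [inv_pow t 3, ht3, inv_div, div_mul_cancel₀ _ hσ₁.ne'] at h
      · simp only [smul_eq_mul]
        field_simp
    · rintro ⟨m, hm, rfl⟩
      have h := sq_mul_mem_IvalSet t hm
      rwa [ht3, div_mul_cancel₀ _ hσ₂.ne'] at h
  rw [ht2, Mfun, Mfun, hset, Real.sInf_smul_of_nonneg (sq_nonneg t), smul_eq_mul]
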